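/- (Warped phase transformation.) Let n ≥ 1, let H₁, H₂ be complex n×n matrices, set A = H₁ + i·H₂, and let u : ℝ → ℂⁿ be differentiable with u'(t) = A·u(t) for all t. Define v : ℝ × ℝ → ℂⁿ by v(t,p) = e^{−p}·u(t). Then for all t and p, ∂_t v(t,p) = −H₁·(∂_p v)(t,p) + i·H₂·v(t,p); that is, v solves the system of linear convection equations obtained from the linear ODE system by the warped phase transformation. -/

import Mathlib

/-- **Warped phase transformation.** If `u' = A u` with `A = H₁ + i H₂`, then
`v(t, p) = e^{−p} u(t)` satisfies `∂ₜ v = −H₁ ∂ₚ v + i H₂ v`. -/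
theorem warped_phase_transformation
    (n : ℕ) (hn : 1 ≤ n) (H₁ H₂ A : Matrix (Fin n) (Fin n) ℂ)
    (hA : A = H₁ + Complex.I • H₂)
    (u : ℝ → (Fin n → ℂ)) (hu : ∀ t : ℝ, HasDerivAt u (A.mulVec (u t)) t)
    (v : ℝ → ℝ → (Fin n → ℂ))
    (hv : ∀ t p : ℝ, v t p = (Real.exp (-p) : ℂ) • u t) :
    ∀ t p : ℝ, ∃ vp : Fin n → ℂ,
      HasDerivAt (fun p' => v t p') vp p ∧
      HasDerivAt (fun t' => v t' p)
        (-(H₁.mulVec vp) + Complex.I • H₂.mulVec (v t p)) t := by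
  intro t p
  -- The warped profile satisfies `∂ₚ v = -v`, which trades `H₁ v` for `-H₁ ∂ₚ v`.
  refine ⟨-(v t p), ?_, ?_⟩
  · have hexp : HasDerivAt (fun q : ℝ => (Real.exp (-q) : ℂ)) (-(Real.exp (-p) : ℂ)) p := by
      simpa using ((hasDerivAt_neg p).exp).ofReal_comp
    simpa only [hv, neg_smul] using hexp.smul_const (u t)
  · have h := (hu t).const_smul (Real.exp (-p) : ℂ)
    simp only [hv]
    refine HasDerivAt.congr_deriv h ?_
    rw [hA, Matrix.add_mulVec, Matrix.smul_mulVec, Matrix.mulVec_neg, neg_neg,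
      Matrix.mulVec_smul, Matrix.mulVec_smul, smul_add, smul_comm Complex.I]
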